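/- In the SimLine setting, assume u ≥ ⌈log₂ q⌉ + ⌈log₂ v⌉ where q ≥ 1 and s ≥ 1 are integers. Let A₁ be any function mapping a pair (RO, X) to a string in {0,1}^s, and let A₂ be any function mapping a pair consisting of a string in {0,1}^s and an oracle RO : {0,1}^n → {0,1}^n to a list of q strings in {0,1}^n; write Q(RO, X) for the set of entries of A₂(A₁(RO, X), RO). Then for every integer a ≥ 0, every set of indices I ⊆ {a+1, …, min(a+v, w)}, and every integer α ≥ 1, the probability over uniformly random (RO, X) that |Q(RO, X) ∩ {s_j : j ∈ I}| ≥ α (as a set of n-bit strings) is at most 2^(−(α·(u − ⌈log₂ q⌉ − ⌈log₂ v⌉) − s − 1)). -/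

import Mathlib

/-- Probability of `P` under the uniform distribution on a finite type `Ω`. -/
noncomputable def unifProb {Ω : Type} [Fintype Ω] (P : Ω → Prop) : ℝ :=
  (Set.ncard {ω : Ω | P ω} : ℝ) / (Fintype.card Ω : ℝ)
/-- Bit strings of length `k`. -/
abbrev Bits (k : ℕ) := Fin k → Bool

/-- The `j`-th bit (`0`-based) of a bit string, `false` out of range. -/
def bitAt {k : ℕ} (y : Bits k) (j : ℕ) : Bool := if h : j < k then y ⟨j, h⟩ else false

/-- The `i`-th block (`0`-based) of the input `X = (x_1, …, x_v)`. -/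
def getX {u v : ℕ} (X : Fin v → Bits u) (i : ℕ) : Bits u :=
  if h : i < v then X ⟨i, h⟩ else fun _ => false
/-- The SimLine query string built from the step counter `k` (`0`-based, so paper index
`k+1`) and the current chain value `r`: the concatenation of `x_{(k mod v)+1}` (1-based),
`r`, and `n − 2u` zeros. -/
def simStr (n u v : ℕ) (X : Fin v → Bits u) (k : ℕ) (r : Bits u) : Bits n := fun j =>
  if (j : ℕ) < u then bitAt (getX X (k % v)) (j : ℕ)
  else if (j : ℕ) < 2 * u then bitAt r ((j : ℕ) - u)
  else false

/-- `simR n u v RO X k` is the paper's `r_{k+1}`:  `r_1 = 0^u` and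
`r_{i+1} = ` the first `u` bits of `RO(s_i)`. -/
def simR (n u v : ℕ) (RO : Bits n → Bits n) (X : Fin v → Bits u) : ℕ → Bits u
  | 0 => fun _ => false
  | k + 1 => fun j => bitAt (RO (simStr n u v X k (simR n u v RO X k))) (j : ℕ)

/-- `simS n u v RO X k` is the paper's `s_{k+1}`. -/
def simS (n u v : ℕ) (RO : Bits n → Bits n) (X : Fin v → Bits u) (k : ℕ) : Bits n :=
  simStr n u v X k (simR n u v RO X k)

/-!
Fix the oracle and the state. The query list is then a fixed list of `q` strings, whose `u`-bit
prefixes form a set `P` of at most `q` blocks, while `X` is still uniform. Whatever the chain values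
are, the prefix of `s_j` is the block of `X` at position `j`, so querying `s_j` forces that block
into `P`. The blocks at the positions of `I` are independent, hence `α` given ones lie in `P` with
probability at most `(q / 2 ^ u) ^ α`. A union bound over the `α`-subsets of `I`, followed by a
union bound over the values of the state, pays for the dependence of the state on `X`.
-/

open Finset
open scoped BigOperators

section UniformProbability

variable {Ω : Type} [Fintype Ω]

open Classical in
lemma unifProb_eq_expect (P : Ω → Prop) : unifProb P = 𝔼 ω, if P ω then (1 : ℝ) else 0 := by
  rw [unifProb, Set.ncard_eq_toFinset_card', Set.toFinset_ofPred, Fintype.expect_eq_sum_div_card,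
    sum_boole]

lemma unifProb_mono {P P' : Ω → Prop} (h : ∀ ω, P ω → P' ω) : unifProb P ≤ unifProb P' := by
  have hsub : {ω | P ω} ⊆ {ω | P' ω} := h
  unfold unifProb
  gcongr
  exact Set.toFinite _

lemma unifProb_exists_le_sum {κ : Type*} (T : Finset κ) (P : κ → Ω → Prop) :
    unifProb (fun ω => ∃ i ∈ T, P i ω) ≤ ∑ i ∈ T, unifProb (P i) := by
  classical
  simp only [unifProb_eq_expect, ← expect_sum_comm]
  refine expect_le_expect fun ω _ => ?_
  split_ifs with h
  · obtain ⟨i, hi, hPi⟩ := h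
    calc (1 : ℝ) = if P i ω then 1 else 0 := (if_pos hPi).symm
      _ ≤ ∑ i ∈ T, if P i ω then 1 else 0 :=
        single_le_sum (f := fun i => if P i ω then (1 : ℝ) else 0)
          (fun _ _ => by positivity) hi
  · positivity

lemma unifProb_prod_le {R X : Type} [Fintype R] [Nonempty R] [Fintype X] {P : R × X → Prop}
    {ε : ℝ} (h : ∀ r, unifProb (fun x => P (r, x)) ≤ ε) : unifProb P ≤ ε := by
  classical
  simp only [unifProb_eq_expect] at h ⊢
  rw [← univ_product_univ, expect_product]
  exact expect_le univ_nonempty fun r _ => h r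

lemma unifProb_advice_le {R X : Type} {S : Type*} [Fintype R] [Nonempty R] [Fintype X] [Fintype S]
    (A : R → X → S) {P : S → R → X → Prop} {ε : ℝ} (h : ∀ σ r, unifProb (P σ r) ≤ ε) :
    unifProb (fun ω : R × X => P (A ω.1 ω.2) ω.1 ω.2) ≤ Fintype.card S * ε :=
  unifProb_prod_le fun r =>
    calc unifProb (fun x => P (A r x) r x)
        ≤ unifProb (fun x => ∃ σ ∈ univ, P σ r x) :=
          unifProb_mono fun x hx => ⟨A r x, mem_univ _, hx⟩
      _ ≤ ∑ σ, unifProb (P σ r) := unifProb_exists_le_sum _ _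
      _ ≤ Fintype.card S * ε := by
          simpa only [nsmul_eq_mul, card_univ] using sum_le_card_nsmul univ _ ε fun σ _ => h σ r

end UniformProbability

section UniformFunctions

variable {ι β : Type} [Fintype ι] [DecidableEq ι] [Fintype β] [Nonempty β]

lemma unifProb_forall_mem_eq_pow (T : Finset ι) (P : Finset β) :
    unifProb (fun x : ι → β => ∀ i ∈ T, x i ∈ P) = ((#P : ℝ) / Fintype.card β) ^ #T := by
  have hset : {x : ι → β | ∀ i ∈ T, x i ∈ P} =
      Fintype.piFinset fun i => if i ∈ T then P else univ := by
    ext x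
    simp only [Set.mem_ofPred_eq, mem_coe, Fintype.mem_piFinset]
    refine forall_congr' fun i => ?_
    split_ifs with hi <;> simp [hi]
  have hfactor (i : ι) : (#(if i ∈ T then P else univ) : ℝ) / Fintype.card β =
      if i ∈ T then (#P : ℝ) / Fintype.card β else 1 := by
    split_ifs <;> simp
  rw [unifProb, hset, Set.ncard_coe_finset, Fintype.card_piFinset, Fintype.card_pi]
  push_cast
  rw [← prod_div_distrib, prod_congr rfl fun i _ => hfactor i, prod_ite_mem, univ_inter, prod_const]

lemma unifProb_le_card_filter_mem_le {κ : Type*} [DecidableEq β] {I : Finset κ} {f : κ → ι}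
    (hf : Set.InjOn f I) (P : Finset β) (α : ℕ) :
    unifProb (fun x : ι → β => α ≤ #{j ∈ I | x (f j) ∈ P}) ≤
      (#I).choose α * ((#P : ℝ) / Fintype.card β) ^ α := by
  have hsubset (x : ι → β) (hx : α ≤ #{j ∈ I | x (f j) ∈ P}) :
      ∃ T ∈ powersetCard α I, ∀ i ∈ T.image f, x i ∈ P := by
    obtain ⟨T, hTsub, hTcard⟩ := exists_subset_card_eq hx
    refine ⟨T, mem_powersetCard.2 ⟨hTsub.trans (filter_subset _ _), hTcard⟩, ?_⟩
    exact forall_mem_image.2 fun j hj => (mem_filter.1 (hTsub hj)).2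
  have hprob (T : Finset κ) (hT : T ∈ powersetCard α I) :
      unifProb (fun x : ι → β => ∀ i ∈ T.image f, x i ∈ P) =
        ((#P : ℝ) / Fintype.card β) ^ α := by
    obtain ⟨hTI, hTcard⟩ := mem_powersetCard.1 hT
    rw [unifProb_forall_mem_eq_pow, card_image_of_injOn (hf.mono hTI), hTcard]
  calc unifProb (fun x : ι → β => α ≤ #{j ∈ I | x (f j) ∈ P})
      ≤ unifProb (fun x : ι → β => ∃ T ∈ powersetCard α I, ∀ i ∈ T.image f, x i ∈ P) :=
        unifProb_mono hsubset
    _ ≤ ∑ T ∈ powersetCard α I, unifProb (fun x : ι → β => ∀ i ∈ T.image f, x i ∈ P) :=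
        unifProb_exists_le_sum _ _
    _ = (#I).choose α * ((#P : ℝ) / Fintype.card β) ^ α := by
        rw [sum_congr rfl hprob, sum_const, card_powersetCard, nsmul_eq_mul]

end UniformFunctions

section SimLine

variable {n u v q : ℕ}

/-- The `u`-bit prefix of a bit string, which for a chain string `s_j` is its block of `X`. A string
shorter than `u` is padded with `false`. -/
def firstBits (u : ℕ) (y : Bits n) : Bits u := fun j => bitAt y j

lemma firstBits_simS [NeZero v] (hun : u ≤ n) (RO : Bits n → Bits n) (X : Fin v → Bits u)
    (k : ℕ) : firstBits u (simS n u v RO X k) = X (Fin.ofNat v k) := by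
  funext j
  have hjn : (j : ℕ) < n := j.2.trans_le hun
  simp [firstBits, bitAt, simS, simStr, getX, hjn, Nat.mod_lt k (NeZero.pos v), Fin.ofNat]

/-- The set of `u`-bit prefixes of a list of queries: a chain string can only be queried when its
block of `X` lies in this set. -/
def queryPrefixes (u : ℕ) (Q : Fin q → Bits n) : Finset (Bits u) :=
  univ.image fun t => firstBits u (Q t)

lemma card_queryPrefixes_le (u : ℕ) (Q : Fin q → Bits n) : #(queryPrefixes u Q) ≤ q :=
  card_image_le.trans (card_fin q).le

lemma ncard_queries_inter_simS_le [NeZero v] (hun : u ≤ n) (RO : Bits n → Bits n)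
    (X : Fin v → Bits u) (Q : Fin q → Bits n) (I : Finset ℕ) :
    Set.ncard ({y | ∃ t, Q t = y} ∩ {y | ∃ j ∈ I, simS n u v RO X (j - 1) = y}) ≤
      #{j ∈ I | X (Fin.ofNat v (j - 1)) ∈ queryPrefixes u Q} := by
  set J := {j ∈ I | X (Fin.ofNat v (j - 1)) ∈ queryPrefixes u Q}
  have hsub : {y | ∃ t, Q t = y} ∩ {y | ∃ j ∈ I, simS n u v RO X (j - 1) = y} ⊆
      J.image fun j => simS n u v RO X (j - 1) := by
    rintro _ ⟨⟨t, ht⟩, j, hj, rfl⟩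
    have hprefix : X (Fin.ofNat v (j - 1)) ∈ queryPrefixes u Q := by
      rw [← firstBits_simS hun RO X, ← ht]
      exact mem_image_of_mem _ (mem_univ t)
    exact mem_image_of_mem _ (mem_filter.2 ⟨hj, hprefix⟩)
  calc _ ≤ #(J.image fun j => simS n u v RO X (j - 1)) := by
        simpa only [Set.ncard_coe_finset] using Set.ncard_le_ncard hsub
    _ ≤ #J := card_image_le

lemma unifProb_le_ncard_queries_inter_simS_le [NeZero v] (hun : u ≤ n) (RO : Bits n → Bits n)
    (Q : Fin q → Bits n) {I : Finset ℕ} (hI : Set.InjOn (fun j => Fin.ofNat v (j - 1)) I)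
    (α : ℕ) :
    unifProb (fun X : Fin v → Bits u =>
      α ≤ Set.ncard ({y | ∃ t, Q t = y} ∩ {y | ∃ j ∈ I, simS n u v RO X (j - 1) = y})) ≤
      (#I).choose α * ((q : ℝ) / 2 ^ u) ^ α :=
  calc _ ≤ unifProb (fun X : Fin v → Bits u =>
          α ≤ #{j ∈ I | X (Fin.ofNat v (j - 1)) ∈ queryPrefixes u Q}) :=
        unifProb_mono fun X hX => hX.trans (ncard_queries_inter_simS_le hun RO X Q I)
    _ ≤ (#I).choose α * ((#(queryPrefixes u Q) : ℝ) / Fintype.card (Bits u)) ^ α :=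
        unifProb_le_card_filter_mem_le hI _ α
    _ ≤ (#I).choose α * ((q : ℝ) / 2 ^ u) ^ α := by
        have hcard : (Fintype.card (Bits u) : ℝ) = 2 ^ u := by simp
        rw [hcard]
        gcongr
        exact card_queryPrefixes_le u Q

lemma injOn_ofNat_pred_Icc [NeZero v] (a : ℕ) :
    Set.InjOn (fun j => Fin.ofNat v (j - 1)) (Icc (a + 1) (a + v)) := by
  intro i hi j hj hij
  rw [mem_coe, mem_Icc] at hi hj
  have hi' : i - 1 ∈ Ico a (a + v) := mem_Ico.2 (by omega)
  have hj' : j - 1 ∈ Ico a (a + v) := mem_Ico.2 (by omega)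
  have hpred : i - 1 = j - 1 := Nat.mod_injOn_Ico a v hi' hj' (congrArg Fin.val hij)
  omega

end SimLine

lemma choose_mul_div_pow_le_two_zpow {m v : ℕ} (hm : m ≤ v) (u q α : ℕ) :
    (m.choose α : ℝ) * ((q : ℝ) / 2 ^ u) ^ α ≤
      2 ^ (-((α : ℤ) * (u - Nat.clog 2 q - Nat.clog 2 v))) := by
  have hq : (q : ℝ) ≤ 2 ^ Nat.clog 2 q := mod_cast Nat.le_pow_clog one_lt_two q
  have hv : (m : ℝ) ≤ 2 ^ Nat.clog 2 v := mod_cast hm.trans (Nat.le_pow_clog one_lt_two v)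
  have hchoose : (m.choose α : ℝ) ≤ m ^ α := mod_cast Nat.choose_le_pow m α
  calc (m.choose α : ℝ) * ((q : ℝ) / 2 ^ u) ^ α
      ≤ (2 ^ Nat.clog 2 v) ^ α * (2 ^ Nat.clog 2 q / 2 ^ u) ^ α := by
        gcongr
        exact hchoose.trans (by gcongr)
    _ = ((2 : ℝ) ^ ((Nat.clog 2 v : ℤ) + Nat.clog 2 q - u)) ^ (α : ℤ) := by
        rw [zpow_sub₀ two_ne_zero, zpow_add₀ two_ne_zero]
        simp only [zpow_natCast]
        rw [← mul_pow, mul_div_assoc]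
    _ = 2 ^ (-((α : ℤ) * (u - Nat.clog 2 q - Nat.clog 2 v))) := by
        rw [← zpow_mul]
        ring_nf

lemma card_bits_mul_choose_mul_div_pow_le_two_zpow {m v : ℕ} (hm : m ≤ v) (s u q α : ℕ) :
    (Fintype.card (Bits s) : ℝ) * (m.choose α * ((q : ℝ) / 2 ^ u) ^ α) ≤
      2 ^ (-((α : ℤ) * (u - Nat.clog 2 q - Nat.clog 2 v) - s)) := by
  have hstates : (Fintype.card (Bits s) : ℝ) = 2 ^ (s : ℤ) := by simp
  rw [hstates, neg_sub, sub_eq_add_neg, zpow_add₀ two_ne_zero]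
  gcongr
  exact choose_mul_div_pow_le_two_zpow hm u q α

theorem stmt9_general {n u v q : ℕ} [NeZero v] (hun : u ≤ n) {S : Type*} [Fintype S]
    (A1 : (Bits n → Bits n) → (Fin v → Bits u) → S)
    (A2 : S → (Bits n → Bits n) → Fin q → Bits n)
    {I : Finset ℕ} (hI : Set.InjOn (fun j => Fin.ofNat v (j - 1)) I) (α : ℕ) :
    unifProb (fun ω : (Bits n → Bits n) × (Fin v → Bits u) =>
      α ≤ Set.ncard ({y : Bits n | ∃ t : Fin q, A2 (A1 ω.1 ω.2) ω.1 t = y} ∩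
        {y : Bits n | ∃ j ∈ I, simS n u v ω.1 ω.2 (j - 1) = y})) ≤
    Fintype.card S * ((#I).choose α * ((q : ℝ) / 2 ^ u) ^ α) :=
  unifProb_advice_le A1
    (P := fun σ RO X => α ≤ Set.ncard ({y | ∃ t, A2 σ RO t = y} ∩
      {y | ∃ j ∈ I, simS n u v RO X (j - 1) = y}))
    fun σ RO => unifProb_le_ncard_queries_inter_simS_le hun RO (A2 σ RO) hI α

/-- **Lemma `smallint`.**
In the SimLine setting with `u ≥ ⌈log₂ q⌉ + ⌈log₂ v⌉`: `A₁` maps `(RO, X)` to an `s`-bit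
state, `A₂` maps an `s`-bit state and an oracle to a list of `q` `n`-bit strings, and
`Q(RO,X)` is the set of entries of `A₂ (A₁ RO X) RO`.  For any window
`I ⊆ {a+1, …, min(a+v, w)}` and any `α ≥ 1`, the probability over uniformly random
`(RO, X)` that `|Q(RO,X) ∩ {s_j : j ∈ I}| ≥ α` is at most
`2^(−(α(u − ⌈log₂ q⌉ − ⌈log₂ v⌉) − s − 1))`.
(Here `simS … (j-1)` is the paper's `s_j`.) -/
theorem stmt9 (n u v w s q : ℕ) (hu : 1 ≤ u) (hn : 2 * u ≤ n) (hv : 2 ≤ v) (hw : 2 ≤ w)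
    (hs : 1 ≤ s) (hq : 1 ≤ q)
    (huq : Nat.clog 2 q + Nat.clog 2 v ≤ u)
    (A1 : (Bits n → Bits n) → (Fin v → Bits u) → Bits s)
    (A2 : Bits s → (Bits n → Bits n) → Fin q → Bits n)
    (a : ℕ) (I : Finset ℕ) (hI : I ⊆ Finset.Icc (a + 1) (min (a + v) w))
    (α : ℕ) (hα : 1 ≤ α) :
    unifProb (fun ω : (Bits n → Bits n) × (Fin v → Bits u) =>
      α ≤ Set.ncard ({y : Bits n | ∃ t : Fin q, A2 (A1 ω.1 ω.2) ω.1 t = y} ∩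
        {y : Bits n | ∃ j ∈ I, simS n u v ω.1 ω.2 (j - 1) = y})) ≤
    (2 : ℝ) ^ (-((α : ℤ) * ((u : ℤ) - (Nat.clog 2 q : ℤ) - (Nat.clog 2 v : ℤ))
      - (s : ℤ) - 1)) := by
  have : NeZero v := ⟨by omega⟩
  have hwindow : I ⊆ Icc (a + 1) (a + v) := hI.trans (Icc_subset_Icc_right (min_le_left _ _))
  have hcard : #I ≤ v := by simpa using card_le_card hwindow
  calc _ ≤ (Fintype.card (Bits s) : ℝ) * ((#I).choose α * ((q : ℝ) / 2 ^ u) ^ α) :=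
        stmt9_general (by omega) A1 A2 ((injOn_ofNat_pred_Icc a).mono hwindow) α
    _ ≤ 2 ^ (-((α : ℤ) * (u - Nat.clog 2 q - Nat.clog 2 v) - s)) :=
        card_bits_mul_choose_mul_div_pow_le_two_zpow hcard s u q α
    _ ≤ _ := zpow_le_zpow_right₀ one_le_two (by linarith)
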